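/- (Decoupling with Eulerian orthogonal arrays.) Let M = (g_{kj}) be an n×N Eulerian orthogonal array of strength t over G = Z_d × Z_d whose first column is the zero column (g_{k,1} = (0,0) for all k). Write s_{kj} = g_{k,j+1} − g_{kj} (indices j cyclic modulo N). Fix Δ > 0 and for each g ∈ G a continuous map u_g : [0,Δ] → M_d(ℂ) with u_g(δ) unitary for every δ ∈ [0,Δ], u_g(0) = I_d, and u_g(Δ) = U_g. Define the control propagator U_c on [0, NΔ) recursively by U_c(0) = I and U_c((j−1)Δ + δ) = (⊗_{k∈Fin n} u_{s_{kj}}(δ)) · U_c((j−1)Δ) for δ ∈ [0,Δ) and j = 1,…,N. Then for every injective map κ : Fin t → Fin n and every traceless d^t×d^t complex matrix X, (1/(NΔ)) ∫_0^{NΔ} U_c(τ)^* X^{(κ)} U_c(τ) dτ = 0. -/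

import Mathlib

/-!
The conjugation `U_c(τ)^* X^{(κ)} U_c(τ)` averages to zero because of a twirl. Since `g ↦ U_g` is a
projective representation (`Umat_mul`) and `u_s(Δ) = U_s`, the propagator at time `jΔ` is, up to a
phase, the product operator `⊗_k U_{g_{kj}}`; the phase cancels in the conjugation. On the `j`-th
interval the integrand is therefore `X^{(κ)}` conjugated by `⊗_k u_{s_{kj}}(δ)` and then by
`⊗_k U_{g_{kj}}`. These are product unitaries, so the factors off the range of `κ` cancel
(`embed_conj`) and everything happens on the `t` sites chosen by `κ`.

For fixed `δ`, group the columns `j` by the pair (column, increment) restricted to those sites. The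
Eulerian property says every pair in `G^t × S_κ` occurs equally often, so the sum over `j` is a
multiple of `∑_s ∑_a U_a^* Y_s U_a` (`sum_columns_eq_zero`), where `Y_s` is a unitary conjugate of
`X`, hence traceless. The inner sum is the full Weyl twirl `d^t tr(Y_s) I = 0` (`twirl_eq_zero`),
which reduces to the orthogonality of matrix entries of the `U_g` (`Umat_sum`). Thus the sum of the
`N` integrands vanishes at every `δ`, and `integral_eq_zero_of_profiles` gives the vanishing of the
time integral.
-/

open scoped BigOperators Matrix Classical

/-- The cyclic-shift matrix `S = ∑_k |k⟩⟨k+1 mod d|`. -/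
noncomputable def shiftMat (d : ℕ) : Matrix (Fin d) (Fin d) ℂ :=
  Matrix.of fun k l => if (l : ℕ) = ((k : ℕ) + 1) % d then 1 else 0

/-- The clock matrix `T = ∑_k ω^k |k⟩⟨k|` with `ω = exp(2πi/d)`. -/
noncomputable def clockMat (d : ℕ) : Matrix (Fin d) (Fin d) ℂ :=
  Matrix.of fun k l =>
    if k = l then Complex.exp (2 * Real.pi * Complex.I / d) ^ (k : ℕ) else 0

/-- `U_g = S^a T^b` for `g = (a, b) ∈ Z_d × Z_d`. -/
noncomputable def Umat (d : ℕ) (g : ZMod d × ZMod d) : Matrix (Fin d) (Fin d) ℂ :=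
  shiftMat d ^ g.1.val * clockMat d ^ g.2.val

/-- Tensor product `⊗V` of a family of `d × d` matrices, with rows and columns
indexed by functions `Fin n → Fin d`. -/
noncomputable def tensorProd {n d : ℕ} (V : Fin n → Matrix (Fin d) (Fin d) ℂ) :
    Matrix (Fin n → Fin d) (Fin n → Fin d) ℂ :=
  Matrix.of fun x y => ∏ i, V i (x i) (y i)

/-- The embedding `X^{(κ)}` of a `d^t × d^t` matrix `X` into the `n`-fold tensor
product, acting on the qudits selected by `κ` and trivially elsewhere. -/
noncomputable def embed {t n d : ℕ} (κ : Fin t → Fin n)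
    (X : Matrix (Fin t → Fin d) (Fin t → Fin d) ℂ) :
    Matrix (Fin n → Fin d) (Fin n → Fin d) ℂ :=
  Matrix.of fun x y =>
    if ∀ i : Fin n, i ∉ Set.range κ → x i = y i then X (x ∘ κ) (y ∘ κ) else 0


attribute [local instance] Matrix.normedAddCommGroup Matrix.normedSpace

/-! ### The Weyl operators `U_g` in coordinates -/

theorem natCast_eq_iff {d : ℕ} [NeZero d] (x : Fin d) (z : ZMod d) :
    (((x : ℕ) : ZMod d) = z) ↔ x = ⟨z.val, ZMod.val_lt z⟩ := by
  constructor
  · rintro rfl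
    ext
    simp [ZMod.val_natCast, Nat.mod_eq_of_lt x.2]
  · rintro rfl
    simp

theorem natCast_inj {d : ℕ} [NeZero d] (x y : Fin d) :
    (((x : ℕ) : ZMod d) = ((y : ℕ) : ZMod d)) ↔ x = y := by
  rw [natCast_eq_iff]
  congr! 1
  ext
  simp [ZMod.val_natCast, Nat.mod_eq_of_lt y.2]

theorem shiftMat_apply {d : ℕ} [NeZero d] (p x : Fin d) :
    shiftMat d p x = if ((x : ℕ) : ZMod d) = ((p : ℕ) : ZMod d) + 1 then 1 else 0 := by
  simp only [shiftMat, Matrix.of_apply]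
  congr 1
  rw [← Nat.cast_add_one, ZMod.natCast_eq_natCast_iff, Nat.ModEq, Nat.mod_eq_of_lt x.2]

theorem shiftMat_pow_apply {d : ℕ} [NeZero d] (a : ℕ) (p x : Fin d) :
    (shiftMat d ^ a) p x =
      if ((x : ℕ) : ZMod d) = ((p : ℕ) : ZMod d) + (a : ZMod d) then 1 else 0 := by
  induction a generalizing x with
  | zero => simp [Matrix.one_apply, natCast_inj, eq_comm]
  | succ a ih =>
    rw [pow_succ, Matrix.mul_apply]
    simp_rw [ih, shiftMat_apply, ite_mul, one_mul, zero_mul,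
      natCast_eq_iff _ (((p : ℕ) : ZMod d) + (a : ZMod d))]
    rw [Finset.sum_ite_eq' Finset.univ]
    simp [add_assoc]

/-- Writing `χ` for the standard character `χ(z) = exp(2πi z/d)` of `ℤ/d`, the matrix `U_{(a,b)}`
is the monomial matrix with entries `δ_{x, p+a} χ(b x)`. -/
theorem Umat_apply {d : ℕ} [NeZero d] (g : ZMod d × ZMod d) (p x : Fin d) :
    Umat d g p x = if ((x : ℕ) : ZMod d) = ((p : ℕ) : ZMod d) + g.1 then
      ZMod.stdAddChar (g.2 * ((x : ℕ) : ZMod d)) else 0 := by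
  have hT : clockMat d =
      Matrix.diagonal fun k : Fin d => ZMod.stdAddChar (((k : ℕ) : ZMod d)) := by
    ext k l
    simp only [clockMat, Matrix.of_apply, Matrix.diagonal_apply]
    congr 1
    have := ZMod.stdAddChar_coe (N := d) (k : ℤ)
    simp only [Int.cast_natCast] at this
    rw [this, ← Complex.exp_nat_mul]
    congr 1
    ring
  rw [Umat, hT, Matrix.diagonal_pow, Matrix.mul_diagonal, shiftMat_pow_apply]
  simp only [ZMod.natCast_val, ZMod.cast_id', id_eq, Pi.pow_apply, ite_mul, one_mul, zero_mul]
  congr 1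
  rw [← AddChar.map_nsmul_eq_pow, nsmul_eq_mul]
  simp

theorem Umat_zero {d : ℕ} [NeZero d] : Umat d 0 = 1 := by
  simp [Umat]

theorem star_stdAddChar {d : ℕ} [NeZero d] (z : ZMod d) :
    star (ZMod.stdAddChar z : ℂ) = ZMod.stdAddChar (-z) := by
  rw [AddChar.map_neg_eq_conj]; rfl

theorem star_stdAddChar_mul_self {d : ℕ} [NeZero d] (z : ZMod d) :
    star (ZMod.stdAddChar z : ℂ) * ZMod.stdAddChar z = 1 := by
  rw [star_stdAddChar, ← AddChar.map_add_eq_mul]; simp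

/-- `g ↦ U_g` is a projective representation: it is multiplicative up to a root of unity. -/
theorem Umat_mul {d : ℕ} [NeZero d] (g h : ZMod d × ZMod d) :
    Umat d g * Umat d h = (ZMod.stdAddChar (-(g.2 * h.1)) : ℂ) • Umat d (g + h) := by
  ext p x
  rw [Matrix.mul_apply, Matrix.smul_apply]
  simp_rw [Umat_apply, ite_mul, zero_mul, natCast_eq_iff _ (((p : ℕ) : ZMod d) + g.1)]
  rw [Finset.sum_ite_eq' Finset.univ]
  simp only [Finset.mem_univ, if_true, Prod.fst_add, Prod.snd_add, ZMod.natCast_val,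
    ZMod.cast_id', id_eq, smul_eq_mul, mul_ite, mul_zero, ← AddChar.map_add_eq_mul, add_assoc]
  split_ifs with hx
  · rw [hx]; congr 1; ring
  · rfl

/-- Orthogonality of the matrix entries of the `U_g`: this is the one-site form of the identity
`∑_g U_g^* Y U_g = d tr(Y) I`. -/
theorem Umat_sum {d : ℕ} [NeZero d] (p q x y : Fin d) :
    ∑ g, star (Umat d g p x) * Umat d g q y = if p = q ∧ x = y then (d : ℂ) else 0 := by
  rw [Fintype.sum_prod_type]
  have h1 : ∀ a : ZMod d, ∑ b, star (Umat d (a, b) p x) * Umat d (a, b) q y =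
      if a = ((x : ℕ) : ZMod d) - ((p : ℕ) : ZMod d) then
        (if p = q ∧ x = y then (d : ℂ) else 0) else 0 := by
    intro a
    simp only [Umat_apply]
    by_cases hx : ((x : ℕ) : ZMod d) = ((p : ℕ) : ZMod d) + a
    · rw [if_pos (by rw [hx]; ring)]
      by_cases hy : ((y : ℕ) : ZMod d) = ((q : ℕ) : ZMod d) + a
      · simp only [if_pos hx, if_pos hy, star_stdAddChar, ← AddChar.map_add_eq_mul]
        have : ∀ b : ZMod d, -(b * ((x : ℕ) : ZMod d)) + b * ((y : ℕ) : ZMod d) =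
          b * (((y : ℕ) : ZMod d) - ((x : ℕ) : ZMod d)) := fun b => by ring
        simp_rw [this]
        rw [AddChar.sum_mulShift _ (ZMod.isPrimitive_stdAddChar d), ZMod.card]
        have e : (((y : ℕ) : ZMod d) - ((x : ℕ) : ZMod d) = 0) ↔ (p = q ∧ x = y) := by
          rw [sub_eq_zero, natCast_inj]
          constructor
          · rintro rfl
            exact ⟨(natCast_inj p q).1 (add_right_cancel (hx.symm.trans hy)), rfl⟩
          · rintro ⟨_, rfl⟩; rfl
        simp [e]
      · rw [if_neg]
        · simp [hy]
        · rintro ⟨rfl, rfl⟩; exact hy hx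
    · rw [if_neg (fun h => hx (by rw [h]; ring))]
      simp [hx]
  simp_rw [h1]
  simp

/-! ### Tensor products and local embeddings -/

theorem tensorProd_mul {n d : ℕ} (V W : Fin n → Matrix (Fin d) (Fin d) ℂ) :
    tensorProd V * tensorProd W = tensorProd (fun k => V k * W k) := by
  ext x y
  simp only [tensorProd, Matrix.mul_apply, Matrix.of_apply, ← Finset.prod_mul_distrib]
  rw [Finset.prod_univ_sum, Fintype.piFinset_univ]

theorem tensorProd_conjTranspose {n d : ℕ} (V : Fin n → Matrix (Fin d) (Fin d) ℂ) :
    (tensorProd V)ᴴ = tensorProd (fun k => (V k)ᴴ) := by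
  ext x y
  simp [tensorProd, Matrix.conjTranspose_apply]

theorem tensorProd_smul {n d : ℕ} (c : Fin n → ℂ) (V : Fin n → Matrix (Fin d) (Fin d) ℂ) :
    tensorProd (fun k => c k • V k) = (∏ k, c k) • tensorProd V := by
  ext x y
  simp [tensorProd, Finset.prod_mul_distrib]

theorem tensorProd_one {n d : ℕ} :
    tensorProd (fun _ : Fin n => (1 : Matrix (Fin d) (Fin d) ℂ)) = 1 := by
  ext x y
  simp only [tensorProd, Matrix.of_apply, Matrix.one_apply, Finset.prod_ite_zero, funext_iff]
  simp

theorem tensorProd_single {t d : ℕ} (x y : Fin t → Fin d) :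
    tensorProd (fun i => Matrix.single (x i) (y i) (1 : ℂ)) = Matrix.single x y 1 := by
  ext p q
  simp only [tensorProd, Matrix.of_apply, Matrix.single_apply, Finset.prod_ite_zero, funext_iff,
    ← forall_and]
  simp

/-- Embedding a product operator at the sites `κ` gives the product operator that is the
identity off the range of `κ`. -/
theorem embed_tensorProd {t n d : ℕ} {κ : Fin t → Fin n} (hκ : Function.Injective κ)
    (A : Fin t → Matrix (Fin d) (Fin d) ℂ) :
    embed κ (tensorProd A) = tensorProd (Function.extend κ A (fun _ => 1)) := by
  ext x y
  simp only [embed, tensorProd, Matrix.of_apply, Function.comp_apply]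
  split_ifs with h
  · symm
    rw [← Finset.prod_subset (Finset.subset_univ (Finset.univ.map ⟨κ, hκ⟩))]
    · simp [hκ.extend_apply]
    · intro i _ hi
      have hi' : ¬ ∃ a, κ a = i := by simpa using hi
      rw [Function.extend_apply' _ _ _ hi', h i hi', Matrix.one_apply_eq]
  · push Not at h
    obtain ⟨i, hi, hne⟩ := h
    symm
    refine Finset.prod_eq_zero (Finset.mem_univ i) ?_
    rw [Function.extend_apply' _ _ _ hi, Matrix.one_apply_ne hne]

theorem embed_add {t n d : ℕ} (κ : Fin t → Fin n)
    (X Y : Matrix (Fin t → Fin d) (Fin t → Fin d) ℂ) :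
    embed κ (X + Y) = embed κ X + embed κ Y := by
  ext x y
  by_cases h : ∀ i : Fin n, i ∉ Set.range κ → x i = y i
  · simp only [embed, Matrix.of_apply, Matrix.add_apply, if_pos h]
  · simp only [embed, Matrix.of_apply, Matrix.add_apply, if_neg h, add_zero]

theorem embed_smul {t n d : ℕ} (κ : Fin t → Fin n) (c : ℂ)
    (X : Matrix (Fin t → Fin d) (Fin t → Fin d) ℂ) :
    embed κ (c • X) = c • embed κ X := by
  ext x y
  by_cases h : ∀ i : Fin n, i ∉ Set.range κ → x i = y i
  · simp only [embed, Matrix.of_apply, Matrix.smul_apply, if_pos h]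
  · simp only [embed, Matrix.of_apply, Matrix.smul_apply, if_neg h, smul_zero]

/-- `embed κ` as a linear map. -/
noncomputable def embedLin {t n d : ℕ} (κ : Fin t → Fin n) :
    Matrix (Fin t → Fin d) (Fin t → Fin d) ℂ →ₗ[ℂ]
      Matrix (Fin n → Fin d) (Fin n → Fin d) ℂ where
  toFun := embed κ
  map_add' := embed_add κ
  map_smul' := embed_smul κ

theorem unitaryGroup_left {m : Type*} [Fintype m] [DecidableEq m] {A : Matrix m m ℂ}
    (h : A ∈ Matrix.unitaryGroup m ℂ) : Aᴴ * A = 1 :=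
  Matrix.mem_unitaryGroup_iff'.1 h

/-- Conjugating by a product unitary only acts on the sites in the range of `κ`: off the range
the factors cancel. By linearity it is enough to check this on matrix units, which are product
operators. -/
theorem embed_conj {t n d : ℕ} {κ : Fin t → Fin n} (hκ : Function.Injective κ)
    (V : Fin n → Matrix (Fin d) (Fin d) ℂ) (hV : ∀ k, V k ∈ Matrix.unitaryGroup (Fin d) ℂ)
    (X : Matrix (Fin t → Fin d) (Fin t → Fin d) ℂ) :
    (tensorProd V)ᴴ * embed κ X * tensorProd V =
      embed κ ((tensorProd (fun i => V (κ i)))ᴴ * X * tensorProd (fun i => V (κ i))) := by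
  induction X using Matrix.induction_on' with
  | h_zero =>
    have h0 : embed (n := n) (d := d) κ 0 = 0 := (embedLin κ).map_zero
    simp [h0]
  | h_add p q hp hq =>
    simp only [embed_add, Matrix.mul_add, Matrix.add_mul, hp, hq]
  | h_std_basis x y c =>
    have hc : Matrix.single x y c =
        c • tensorProd (fun i => Matrix.single (x i) (y i) (1 : ℂ)) := by
      rw [tensorProd_single, Matrix.smul_single, smul_eq_mul, mul_one]
    rw [hc, embed_smul, Matrix.mul_smul, Matrix.mul_smul, Matrix.smul_mul, Matrix.smul_mul,
      embed_smul, embed_tensorProd hκ, tensorProd_conjTranspose, tensorProd_conjTranspose,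
      tensorProd_mul, tensorProd_mul, tensorProd_mul, tensorProd_mul, embed_tensorProd hκ]
    congr 2
    funext k
    by_cases hk : ∃ i, κ i = k
    · obtain ⟨i, rfl⟩ := hk
      rw [hκ.extend_apply, hκ.extend_apply]
    · rw [Function.extend_apply' _ _ _ hk, Function.extend_apply' _ _ _ hk, mul_one,
        unitaryGroup_left (hV k)]

theorem tensorProd_mem_unitary {n d : ℕ} (V : Fin n → Matrix (Fin d) (Fin d) ℂ)
    (hV : ∀ k, V k ∈ Matrix.unitaryGroup (Fin d) ℂ) :
    (tensorProd V) * (tensorProd V)ᴴ = 1 := by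
  rw [tensorProd_conjTranspose, tensorProd_mul, ← tensorProd_one]
  congr 1
  funext k
  exact Matrix.mem_unitaryGroup_iff.1 (hV k)

/-- Twirling a traceless operator over all `t`-fold products of Weyl operators gives zero. -/
theorem twirl_eq_zero {t d : ℕ} [NeZero d]
    (Y : Matrix (Fin t → Fin d) (Fin t → Fin d) ℂ) (hY : Y.trace = 0) :
    ∑ a : Fin t → ZMod d × ZMod d,
      (tensorProd (fun i => Umat d (a i)))ᴴ * Y * tensorProd (fun i => Umat d (a i)) = 0 := by
  have key : ∀ p q x y : Fin t → Fin d, ∑ a : Fin t → ZMod d × ZMod d,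
      (star (∏ i, Umat d (a i) (p i) (x i)) * ∏ i, Umat d (a i) (q i) (y i)) =
      if p = q then (if x = y then (d : ℂ) ^ t else 0) else 0 := by
    intro p q x y
    simp only [star_prod, ← Finset.prod_mul_distrib]
    rw [← Fintype.piFinset_univ,
      ← Finset.prod_univ_sum (fun _ => Finset.univ)
        (fun i (g : ZMod d × ZMod d) => star (Umat d g (p i) (x i)) * Umat d g (q i) (y i))]
    simp only [Umat_sum, Finset.prod_ite_zero, funext_iff, ← ite_and]
    simp [forall_and]
  ext x y
  simp only [Matrix.sum_apply, Matrix.mul_apply, Matrix.conjTranspose_apply, tensorProd,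
    Matrix.of_apply, Finset.sum_mul]
  rw [Finset.sum_comm]
  simp_rw [Finset.sum_comm (s := (Finset.univ : Finset (Fin t → ZMod d × ZMod d)))]
  have : ∀ q p : Fin t → Fin d, ∑ a : Fin t → ZMod d × ZMod d,
      star (∏ i, Umat d (a i) (p i) (x i)) * Y p q * ∏ i, Umat d (a i) (q i) (y i) =
      if p = q then Y p q * (if x = y then (d : ℂ) ^ t else 0) else 0 := by
    intro q p
    rw [← mul_ite_zero, ← key, Finset.mul_sum]
    exact Finset.sum_congr rfl fun a _ => by ring
  simp_rw [this]
  simp only [Finset.sum_ite_eq', Finset.mem_univ, if_true, ← Finset.sum_mul]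
  have hY' : ∑ q, Y q q = 0 := hY
  rw [hY', zero_mul]; rfl

/-! ### The propagator at the interval endpoints and the time average -/

/-- The pairs (column, increment) of an Eulerian array visit every element of `G^t × S` equally
often, so summing a conjugation by them reduces to a full twirl for each increment `s ∈ S`. -/
theorem sum_columns_eq_zero {N t d : ℕ} [NeZero d] [NeZero N]
    (a s : ZMod N → Fin t → ZMod d × ZMod d)
    (S : Finset (Fin t → ZMod d × ZMod d)) (lam : ℕ) (hS : ∀ j, s j ∈ S)
    (hcard : ∀ a' : Fin t → ZMod d × ZMod d, ∀ s' ∈ S,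
      Nat.card {j : ZMod N // (∀ i, a j i = a' i) ∧ (∀ i, s j i = s' i)} = lam)
    (Y : (Fin t → ZMod d × ZMod d) → Matrix (Fin t → Fin d) (Fin t → Fin d) ℂ)
    (hY : ∀ s' ∈ S, (Y s').trace = 0) :
    ∑ j, (tensorProd (fun i => Umat d (a j i)))ᴴ * Y (s j) *
      tensorProd (fun i => Umat d (a j i)) = 0 := by
  rw [← Finset.sum_fiberwise_of_maps_to (s := Finset.univ) (t := Finset.univ ×ˢ S)
    (g := fun j => (a j, s j)) (fun j _ => by simp [hS j])]
  have h1 : ∀ p ∈ (Finset.univ : Finset (Fin t → ZMod d × ZMod d)) ×ˢ S,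
      ∑ j with (a j, s j) = p, (tensorProd (fun i => Umat d (a j i)))ᴴ * Y (s j) *
        tensorProd (fun i => Umat d (a j i)) =
      lam • ((tensorProd (fun i => Umat d (p.1 i)))ᴴ * Y p.2 *
        tensorProd (fun i => Umat d (p.1 i))) := by
    rintro ⟨a', s'⟩ hp
    have hs' : s' ∈ S := by simpa using hp
    rw [← hcard a' s' hs', Nat.card_eq_fintype_card, Fintype.card_subtype]
    have hf : (Finset.univ.filter fun j => (a j, s j) = (a', s')) =
        Finset.univ.filter fun j => (∀ i, a j i = a' i) ∧ (∀ i, s j i = s' i) := by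
      ext j; simp [funext_iff]
    rw [← hf]
    apply Finset.sum_eq_card_nsmul
    intro j hj
    obtain ⟨h1, h2⟩ := Prod.mk.inj (Finset.mem_filter.1 hj).2
    rw [h1, h2]
  rw [Finset.sum_congr rfl h1, Finset.sum_product_right]
  refine Finset.sum_eq_zero fun s' hs' => ?_
  rw [← Finset.smul_sum, twirl_eq_zero _ (hY s' hs'), smul_zero]

/-- Phases cancel in a conjugation. -/
theorem conj_phase {m : Type*} [Fintype m] (c : ℂ) (hc : star c * c = 1) (V W A : Matrix m m ℂ) :
    (V * (c • W))ᴴ * A * (V * (c • W)) = Wᴴ * (Vᴴ * A * V) * W := by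
  simp only [Matrix.conjTranspose_mul, Matrix.conjTranspose_smul, Matrix.mul_smul,
    Matrix.smul_mul, smul_smul, hc, mul_comm c, one_smul, Matrix.mul_assoc]

theorem continuousOn_tensorProd {n d : ℕ} (V : Fin n → ℝ → Matrix (Fin d) (Fin d) ℂ) (s : Set ℝ)
    (hV : ∀ k, ContinuousOn (V k) s) : ContinuousOn (fun δ => tensorProd (fun k => V k δ)) s := by
  refine continuousOn_pi.2 fun x => continuousOn_pi.2 fun y => ?_
  change ContinuousOn (fun δ => ∏ k, V k δ (x k) (y k)) s
  refine continuousOn_finsetProd _ fun k _ => ?_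
  exact continuousOn_pi.1 (continuousOn_pi.1 (hV k) (x k)) (y k)

theorem sum_range_natCast_zmod {N : ℕ} [NeZero N] {E : Type*} [AddCommMonoid E] (f : ZMod N → E) :
    ∑ j ∈ Finset.range N, f (j : ZMod N) = ∑ j, f j := by
  refine Finset.sum_bij' (fun j _ => (j : ZMod N)) (fun j _ => j.val) ?_ ?_ ?_ ?_ ?_
  · simp
  · intro j _; simpa using ZMod.val_lt j
  · intro j hj; exact ZMod.val_natCast_of_lt (Finset.mem_range.1 hj)
  · intro j _; simp
  · simp

/-- If `f` is given on each interval `[jΔ, (j+1)Δ]` by a continuous profile `g j`, and the profiles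
sum to zero pointwise, then `f` integrates to zero over `[0, NΔ]`. -/
theorem integral_eq_zero_of_profiles {E : Type*} [NormedAddCommGroup E] [NormedSpace ℝ E]
    {N : ℕ} {Δ : ℝ} (hΔ : 0 < Δ) (f : ℝ → E) (g : ℕ → ℝ → E)
    (hg : ∀ j < N, ContinuousOn (g j) (Set.Icc 0 Δ))
    (hfg : ∀ j < N, ∀ δ ∈ Set.Icc (0 : ℝ) Δ, f ((j : ℝ) * Δ + δ) = g j δ)
    (hsum : ∀ δ ∈ Set.Icc (0 : ℝ) Δ, ∑ j ∈ Finset.range N, g j δ = 0) :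
    ∫ τ in (0 : ℝ)..((N : ℝ) * Δ), f τ = 0 := by
  have hfint : ∀ j < N, IntervalIntegrable f MeasureTheory.volume ((j : ℝ) * Δ)
      (((j + 1 : ℕ) : ℝ) * Δ) := by
    intro j hj
    apply ContinuousOn.intervalIntegrable
    have hcont : ContinuousOn (fun τ => g j (τ - (j : ℝ) * Δ))
        (Set.Icc ((j : ℝ) * Δ) (((j + 1 : ℕ) : ℝ) * Δ)) := by
      refine (hg j hj).comp (by fun_prop) ?_
      rintro τ ⟨h1, h2⟩
      push_cast at h2
      constructor <;> linarith
    rw [Set.uIcc_of_le (by push_cast; nlinarith)]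
    refine hcont.congr ?_
    rintro τ ⟨h1, h2⟩
    push_cast at h2
    have := hfg j hj (τ - (j : ℝ) * Δ) ⟨by linarith, by linarith⟩
    rwa [add_sub_cancel] at this
  have hpiece : ∀ j < N, ∫ τ in ((j : ℝ) * Δ)..(((j + 1 : ℕ) : ℝ) * Δ), f τ =
      ∫ δ in (0 : ℝ)..Δ, g j δ := by
    intro j hj
    have h := intervalIntegral.integral_comp_add_left (a := 0) (b := Δ) f ((j : ℝ) * Δ)
    rw [add_zero, show (j : ℝ) * Δ + Δ = ((j + 1 : ℕ) : ℝ) * Δ by push_cast; ring] at h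
    rw [← h]
    refine intervalIntegral.integral_congr fun δ hδ => ?_
    rw [Set.uIcc_of_le hΔ.le] at hδ
    exact hfg j hj δ hδ
  have h := intervalIntegral.sum_integral_adjacent_intervals (a := fun j : ℕ => (j : ℝ) * Δ) hfint
  rw [Nat.cast_zero, zero_mul] at h
  rw [← h, Finset.sum_congr rfl fun j hj => hpiece j (Finset.mem_range.1 hj),
    ← intervalIntegral.integral_finsetSum]
  · rw [← intervalIntegral.integral_zero (E := E) (a := (0 : ℝ)) (b := Δ)]
    refine intervalIntegral.integral_congr fun δ hδ => ?_
    rw [Set.uIcc_of_le hΔ.le] at hδ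
    exact hsum δ hδ
  · intro j hj
    apply ContinuousOn.intervalIntegrable
    rw [Set.uIcc_of_le hΔ.le]
    exact hg j (Finset.mem_range.1 hj)

/-- Decoupling with Eulerian orthogonal arrays (bounded-strength controls). -/
theorem decoupling_with_eulerian_orthogonal_arrays
    (d n N t : ℕ) [NeZero d] (hd : 1 ≤ d) (hNpos : 1 ≤ N)
    -- the Eulerian orthogonal array of strength `t`, columns indexed cyclically
    (M : Fin n → ZMod N → ZMod d × ZMod d)
    (hfirst : ∀ k, M k 0 = 0)
    (hEOA : ∀ κ' : Fin t → Fin n, Function.Injective κ' →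
      ∃ (Sκ : Finset (Fin t → ZMod d × ZMod d)) (lam : ℕ), 1 ≤ lam ∧
        (∀ j : ZMod N, (fun i => M (κ' i) (j + 1) - M (κ' i) j) ∈ Sκ) ∧
        (∀ a : Fin t → ZMod d × ZMod d, ∀ s ∈ Sκ,
          Nat.card {j : ZMod N //
            (∀ i, M (κ' i) j = a i) ∧ (∀ i, M (κ' i) (j + 1) - M (κ' i) j = s i)} = lam))
    -- the bounded-strength controls realizing the single-qudit operations `U_g`
    (Δ : ℝ) (hΔ : 0 < Δ)
    (u : ZMod d × ZMod d → ℝ → Matrix (Fin d) (Fin d) ℂ)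
    (hu_cont : ∀ g, ContinuousOn (u g) (Set.Icc 0 Δ))
    (hu_unitary : ∀ g, ∀ δ ∈ Set.Icc (0 : ℝ) Δ, u g δ ∈ Matrix.unitaryGroup (Fin d) ℂ)
    (hu0 : ∀ g, u g 0 = 1)
    (huΔ : ∀ g, u g Δ = Umat d g)
    -- the control propagator, defined recursively interval by interval
    (Uc : ℝ → Matrix (Fin n → Fin d) (Fin n → Fin d) ℂ)
    (hUc0 : Uc 0 = 1)
    (hUc : ∀ j : Fin N, ∀ δ ∈ Set.Icc (0 : ℝ) Δ,
      Uc ((j : ℝ) * Δ + δ) =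
        tensorProd (fun k =>
          u (M k (((j : ℕ) : ZMod N) + 1) - M k ((j : ℕ) : ZMod N)) δ) *
          Uc ((j : ℝ) * Δ))
    (κ : Fin t → Fin n) (hκ : Function.Injective κ)
    (X : Matrix (Fin t → Fin d) (Fin t → Fin d) ℂ) (hX : X.trace = 0) :
    (1 / ((N : ℝ) * Δ)) •
        ∫ τ in (0 : ℝ)..((N : ℝ) * Δ), (Uc τ)ᴴ * embed κ X * Uc τ = 0 := by
  have : NeZero N := ⟨by omega⟩
  -- Each `U_g` is unitary, being the value `u_g(Δ)`.
  have hUmat : ∀ g, Umat d g ∈ Matrix.unitaryGroup (Fin d) ℂ := fun g =>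
    huΔ g ▸ hu_unitary g Δ ⟨hΔ.le, le_rfl⟩
  -- At `jΔ` the propagator is, up to phase, the product of the `U_g` of column `j`.
  have hend : ∀ j : ℕ, j < N → ∃ c : ℂ, star c * c = 1 ∧
      Uc ((j : ℝ) * Δ) = c • tensorProd (fun k => Umat d (M k (j : ZMod N))) := by
    intro j
    induction j with
    | zero =>
      intro _
      exact ⟨1, by simp, by simp [hUc0, hfirst, Umat_zero, tensorProd_one]⟩
    | succ j ih =>
      intro hj
      obtain ⟨c, hc, hcj⟩ := ih (by omega)
      have h := hUc ⟨j, by omega⟩ Δ ⟨hΔ.le, le_rfl⟩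
      simp only [huΔ] at h
      rw [hcj, Matrix.mul_smul, tensorProd_mul] at h
      simp only [Umat_mul, tensorProd_smul, smul_smul, sub_add_cancel] at h
      refine ⟨_, ?_, by convert h using 2 <;> push_cast <;> [ring; rfl]⟩
      rw [star_mul, star_prod]
      have hp : (∏ k, star (ZMod.stdAddChar (-((M k ((j : ZMod N) + 1) - M k (j : ZMod N)).2 *
          (M k (j : ZMod N)).1)) : ℂ)) *
          ∏ k, (ZMod.stdAddChar (-((M k ((j : ZMod N) + 1) - M k (j : ZMod N)).2 *
          (M k (j : ZMod N)).1)) : ℂ) = 1 := by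
        rw [← Finset.prod_mul_distrib]
        exact Finset.prod_eq_one fun k _ => star_stdAddChar_mul_self _
      linear_combination (star c * c) * hp + hc
  -- On the `j`-th interval the conjugated operator lives on the sites `κ`, and is a
  -- conjugation of `Y (s_j) δ` by the column-`j` product of Weyl operators.
  let Y : (Fin t → ZMod d × ZMod d) → ℝ → Matrix (Fin t → Fin d) (Fin t → Fin d) ℂ :=
    fun s δ => (tensorProd (fun i => u (s i) δ))ᴴ * X * tensorProd (fun i => u (s i) δ)
  let F : ZMod N → ℝ → Matrix (Fin t → Fin d) (Fin t → Fin d) ℂ := fun j δ =>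
    (tensorProd (fun i => Umat d (M (κ i) j)))ᴴ *
      Y (fun i => M (κ i) (j + 1) - M (κ i) j) δ * tensorProd (fun i => Umat d (M (κ i) j))
  have hint : ∀ j : ℕ, j < N → ∀ δ ∈ Set.Icc (0 : ℝ) Δ,
      (Uc ((j : ℝ) * Δ + δ))ᴴ * embed κ X * Uc ((j : ℝ) * Δ + δ) =
        embed κ (F (j : ZMod N) δ) := by
    intro j hj δ hδ
    obtain ⟨c, hc, hcj⟩ := hend j hj
    have h := hUc ⟨j, hj⟩ δ hδ
    simp only [hcj] at h
    rw [h, conj_phase c hc, embed_conj hκ _ (fun k => hu_unitary _ δ hδ),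
      embed_conj hκ _ (fun k => hUmat _)]
  have hYtr : ∀ s, ∀ δ ∈ Set.Icc (0 : ℝ) Δ, (Y s δ).trace = 0 := by
    intro s δ hδ
    simp only [Y]
    rw [Matrix.trace_mul_cycle, tensorProd_mem_unitary _ (fun i => hu_unitary _ δ hδ),
      Matrix.one_mul, hX]
  have hsum : ∀ δ ∈ Set.Icc (0 : ℝ) Δ, ∑ j, F j δ = 0 := by
    intro δ hδ
    obtain ⟨S, lam, _, hS, hcard⟩ := hEOA κ hκ
    exact sum_columns_eq_zero (fun j i => M (κ i) j)
      (fun j i => M (κ i) (j + 1) - M (κ i) j) S lam hS hcard (fun s => Y s δ)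
      (fun s _ => hYtr s δ hδ)
  have hFcont : ∀ j, ContinuousOn (fun δ => embed (n := n) κ (F j δ)) (Set.Icc 0 Δ) := by
    intro j
    have hT := continuousOn_tensorProd (fun i => u (M (κ i) (j + 1) - M (κ i) j)) (Set.Icc 0 Δ)
      (fun i => hu_cont _)
    have hF : ContinuousOn (F j) (Set.Icc 0 Δ) := by
      refine (continuousOn_const.mul ?_).mul continuousOn_const
      exact (((Continuous.matrix_conjTranspose continuous_id).comp_continuousOn hT).mul
        continuousOn_const).mul hT
    exact ((embedLin (n := n) (d := d) κ).continuous_of_finiteDimensional).comp_continuousOn hF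
  have htotal := integral_eq_zero_of_profiles (N := N) hΔ
    (fun τ => (Uc τ)ᴴ * embed κ X * Uc τ) (fun j δ => embed (n := n) κ (F (j : ZMod N) δ))
    (fun j _ => hFcont j) hint ?_
  · exact (congrArg _ htotal).trans (smul_zero _)
  · intro δ hδ
    rw [sum_range_natCast_zmod (fun j => embed (n := n) κ (F j δ))]
    have hlin := map_sum (embedLin (n := n) (d := d) κ) (fun j => F j δ) Finset.univ
    rw [hsum δ hδ, map_zero] at hlin
    exact hlin.symm
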